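/- Let d = 2^n, let z ∈ ℝ^d be nonzero, let H be the normalized Walsh–Hadamard matrix, let D be a random sign diagonal matrix, and set u = H·D·z. Then for every ε > 0, P(max_{1 ≤ i ≤ d} |u(i)| > ε·‖z‖₂) ≤ 2d·e^{-dε²/2}. -/

import Mathlib

open MeasureTheory ProbabilityTheory Real

/-- The Rademacher distribution on `ℝ`: `±1` each with probability `1/2`. -/
noncomputable def rademacher : Measure ℝ :=
  (2 : ENNReal)⁻¹ • Measure.dirac 1 + (2 : ENNReal)⁻¹ • Measure.dirac (-1)

/-- The normalized Walsh–Hadamard matrix of size `2^n`: entry `(i,j)` is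
`(−1)^{⟨i,j⟩}/√(2^n)` where `⟨i,j⟩` is the inner product of the binary representations of
the (0-indexed) `i` and `j`. -/
noncomputable def hadamardMatrix (n : ℕ) : Matrix (Fin (2 ^ n)) (Fin (2 ^ n)) ℝ :=
  Matrix.of fun i j =>
    (-1 : ℝ) ^ (∑ k : Fin n, ((i : ℕ).testBit k).toNat * ((j : ℕ).testBit k).toNat) /
      Real.sqrt (2 ^ n)

instance rademacher_prob : IsProbabilityMeasure rademacher := by
  constructor
  simp [rademacher, ENNReal.inv_two_add_inv_two]

lemma rademacher_subG : HasSubgaussianMGF (fun x : ℝ => x) 1 rademacher := by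
  have h := hasSubgaussianMGF_of_mem_Icc_of_integral_eq_zero (μ := rademacher)
    (X := fun x : ℝ => x) (a := -1) (b := 1) aemeasurable_id ?_ ?_
  · convert h using 1
    ext
    simp
    norm_num
  · have h1 : ∀ᵐ x ∂(Measure.dirac (1:ℝ)), x ∈ Set.Icc (-1:ℝ) 1 := by
      rw [ae_dirac_eq]; simp
    have h2 : ∀ᵐ x ∂(Measure.dirac (-1:ℝ)), x ∈ Set.Icc (-1:ℝ) 1 := by
      rw [ae_dirac_eq]; simp
    rw [rademacher, ae_add_measure_iff]
    exact ⟨Measure.ae_smul_measure h1 _, Measure.ae_smul_measure h2 _⟩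
  · rw [rademacher, integral_add_measure, integral_smul_measure, integral_smul_measure,
      integral_dirac, integral_dirac]
    · simp
    · exact (integrable_dirac (by simp)).smul_measure (by simp)
    · exact (integrable_dirac (by simp)).smul_measure (by simp)

lemma lin_subG (n : ℕ) (a : Fin (2 ^ n) → ℝ) :
    HasSubgaussianMGF (fun e : Fin (2 ^ n) → ℝ => ∑ j, a j * e j)
      (∑ j, Real.toNNReal (a j ^ 2))
      (Measure.pi fun _ : Fin (2 ^ n) => rademacher) := by
  apply HasSubgaussianMGF.sum_of_iIndepFun
    (X := fun j (e : Fin (2 ^ n) → ℝ) => a j * e j)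
  · exact iIndepFun_pi (X := fun j (x : ℝ) => a j * x) (μ := fun _ => rademacher)
      (fun j => by fun_prop)
  · intro j _
    have mp := measurePreserving_eval (fun _ : Fin (2 ^ n) => rademacher) j
    have := HasSubgaussianMGF.of_map (μ := Measure.pi fun _ : Fin (2 ^ n) => rademacher)
      (Y := Function.eval j) (X := fun x : ℝ => x) (c := 1) mp.measurable.aemeasurable
      (by rw [mp.map_eq]; exact rademacher_subG)
    have h2 := this.const_mul (a j)
    convert! h2 using 1
    ext
    rw [Real.coe_toNNReal _ (sq_nonneg (a j))]
    exact (mul_one (a j ^ 2)).symm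

lemma hadamard_sq (n : ℕ) (i j) : hadamardMatrix n i j ^ 2 = 1 / 2 ^ n := by
  simp only [hadamardMatrix, Matrix.of_apply, div_pow]
  rw [Real.sq_sqrt (by positivity), ← pow_mul, mul_comm, pow_mul]
  simp

lemma tail_one (n : ℕ) (z : EuclideanSpace ℝ (Fin (2 ^ n))) (hz : z ≠ 0)
    (ε : ℝ) (hε : 0 < ε) (i : Fin (2 ^ n)) :
    (Measure.pi fun _ : Fin (2 ^ n) => rademacher)
        {e : Fin (2 ^ n) → ℝ |
          ε * ‖z‖ < |(hadamardMatrix n * Matrix.diagonal e).mulVec z i|}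
      ≤ ENNReal.ofReal (2 * Real.exp (-(2 ^ n : ℝ) * ε ^ 2 / 2)) := by
  have hzn : 0 < ‖z‖ := norm_pos_iff.mpr hz
  have key := lin_subG n (fun j => hadamardMatrix n i j * z j)
  set c : NNReal := ∑ j, Real.toNNReal ((hadamardMatrix n i j * z j) ^ 2) with hc
  have hcv : (c : ℝ) = ‖z‖ ^ 2 / 2 ^ n := by
    rw [hc, EuclideanSpace.real_norm_sq_eq, Finset.sum_div]
    push_cast
    refine Finset.sum_congr rfl fun j _ => ?_
    rw [Real.coe_toNNReal _ (sq_nonneg _), mul_pow, hadamard_sq]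
    ring
  have hexp : -(ε * ‖z‖) ^ 2 / (2 * (c : ℝ)) = -(2 ^ n : ℝ) * ε ^ 2 / 2 := by
    rw [hcv]; field_simp
  have h1 := key.measure_ge_le (ε := ε * ‖z‖) (by positivity)
  have h2 := key.neg.measure_ge_le (ε := ε * ‖z‖) (by positivity)
  rw [hexp] at h1 h2
  rw [← ofReal_measureReal]
  apply ENNReal.ofReal_le_ofReal
  rw [two_mul]
  refine le_trans ?_ (add_le_add h1 h2)
  refine le_trans (measureReal_mono ?_) (measureReal_union_le _ _)
  intro e he
  have hu : (hadamardMatrix n * Matrix.diagonal e).mulVec z i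
      = ∑ j, hadamardMatrix n i j * z j * e j := by
    simp only [Matrix.mulVec, dotProduct, Matrix.mul_diagonal]
    exact Finset.sum_congr rfl fun j _ => by ring
  simp only [Set.mem_ofPred_eq, hu] at he
  rcases lt_abs.mp he with h | h
  · exact Or.inl h.le
  · exact Or.inr h.le

/-- for `d = 2^n`, nonzero `z ∈ ℝ^d`, the normalized Walsh–Hadamard matrix
`H`, a random sign diagonal matrix `D` and `u = H·D·z`, for every `ε > 0` we have
`P(maxᵢ |u(i)| > ε·‖z‖₂) ≤ 2d·e^{-dε²/2}`. -/
theorem stmt_18 (n : ℕ) (z : EuclideanSpace ℝ (Fin (2 ^ n))) (hz : z ≠ 0)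
    (ε : ℝ) (hε : 0 < ε) :
    (Measure.pi fun _ : Fin (2 ^ n) => rademacher)
        {e : Fin (2 ^ n) → ℝ |
          ∃ i, ε * ‖z‖ < |(hadamardMatrix n * Matrix.diagonal e).mulVec z i|}
      ≤ ENNReal.ofReal (2 * (2 ^ n : ℝ) * Real.exp (-(2 ^ n : ℝ) * ε ^ 2 / 2)) := by
  rw [Set.ofPred_exists]
  refine le_trans (measure_iUnion_fintype_le _ _) ?_
  refine le_trans (Finset.sum_le_sum fun i _ => tail_one n z hz ε hε i) ?_
  rw [Finset.sum_const, ← ENNReal.ofReal_nsmul]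
  apply ENNReal.ofReal_le_ofReal
  simp only [Finset.card_univ, Fintype.card_fin, nsmul_eq_mul]
  push_cast
  apply le_of_eq
  ring
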